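/- Let d ∈ ℕ with d ≥ 2 and let M > 0. Then there exists a Res-KAN ×²_d : ℝ^d → ℝ, whose activation coefficient matrices are supported only on the ReLU and ReLU² basis entries (so the sparsity rule is satisfied for every smoothness parameter α > 0), with depth 2(d−1), width at most d+4, and at most d² + 33d − 36 nonzero parameters, such that ×²_d(x) = ∏_{i=1}^d x_i for every x ∈ [−M, M]^d. -/

import Mathlib

/-!
The product is built by a right-to-left scan: while `n + 2` coordinates remain, the state is
`(x_0, …, x_n, p)` with `p` the product of the inputs already absorbed, and two layers replace it by
`(x_0, …, x_{n-1}, x_n * p)`.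

The only nonlinear ingredient is polarization, `4 x p = (p + x)² - (p - x)²`. If `C` dominates
`|x| + |p|`, then `t = p ± x + C` is nonnegative, so `ReLU(t)² - 2 C ReLU(t) = (p ± x)² - C²`
(`quad_relu`). The first layer (`squareLayer`) writes these two numbers `u`, `v` into the last two
coordinates. Moreover `v = (p - x)² - C² ≤ 0`, hence `-v = ReLU(-v)`, and the second layer
(`combineLayer`) outputs `u / 4 + ReLU(-v) / 4 = x p`, where `u` travels along the residual
connection. All other coordinates are carried by the diagonal residual connection too, which is
possible because the scan only ever drops the last coordinate.

The inputs lie in `[-M, M]`, so all partial products are bounded by `(M + 1)^d` and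
`C = 2 (M + 1)^d` works in every step. A pair of layers costs at most `2 n + 13` parameters; the sum
over the `d - 1` pairs is `(d - 1)² + 12 (d - 1)`.
-/


open MeasureTheory Filter Set
open scoped BigOperators ENNReal NNReal

noncomputable section

/-- ReLU activation. -/
def relu (t : ℝ) : ℝ := max t 0

/-- Cardinal B-spline of order `I` (with the indicator convention for `I = 0`). -/
def cardBSpline (I : ℕ) (x : ℝ) : ℝ :=
  if I = 0 then (if 0 ≤ x ∧ x < 1 then 1 else 0)
  else ∑ j ∈ Finset.range (I + 2),
    ((-1 : ℝ) ^ j * ((I + 1).choose j : ℝ) / (Nat.factorial I : ℝ)) * (relu (x - j)) ^ I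

/-- The dictionary `{𝒩_0, …, 𝒩_I, ReLU, ReLU²}` indexed by `Fin (I+3)`. -/
def kanBasis (I : ℕ) (i : Fin (I + 3)) : ℝ → ℝ :=
  if (i : ℕ) ≤ I then cardBSpline (i : ℕ)
  else if (i : ℕ) = I + 1 then relu
  else fun t => (relu t) ^ 2

/-- A Res-KAN layer with spline-order parameter `I`. -/
structure ResKANLayer (I din dout : ℕ) where
  A : Matrix (Fin dout) (Fin din) ℝ
  b : Fin dout → ℝ
  G : Matrix (Fin dout) (Fin din) ℝ
  β : Matrix (Fin (I + 3)) (Fin dout) ℝ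
  G_diag : ∀ (i : Fin dout) (j : Fin din), (i : ℕ) ≠ (j : ℕ) → G i j = 0

/-- The action of a Res-KAN layer: `x ↦ σ_β•(Ax + b) + Gx`. -/
def ResKANLayer.apply {I din dout : ℕ} (ℓ : ResKANLayer I din dout)
    (x : Fin din → ℝ) : Fin dout → ℝ := fun j =>
  (∑ i : Fin (I + 3), ℓ.β i j * kanBasis I i ((ℓ.A.mulVec x + ℓ.b) j)) + ℓ.G.mulVec x j

/-- A residual Kolmogorov–Arnold network from `ℝ^d` to `ℝ^D` with `L` hidden layers. -/
structure ResKAN (I d D : ℕ) where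
  L : ℕ
  dims : ℕ → ℕ
  dims_zero : dims 0 = d
  layers : ∀ l : ℕ, ResKANLayer I (dims l) (dims (l + 1))
  Ahead : Matrix (Fin D) (Fin (dims L)) ℝ
  bhead : Fin D → ℝ

/-- The hidden state `f^{(l)}`. -/
def ResKAN.hidden {I d D : ℕ} (net : ResKAN I d D) :
    (l : ℕ) → (Fin d → ℝ) → Fin (net.dims l) → ℝ
  | 0 => fun x i => x (Fin.cast net.dims_zero i)
  | (l + 1) => fun x => (net.layers l).apply (net.hidden l x)

/-- Evaluation of a Res-KAN: `f̂ = A^{(L+1)} f^{(L)} + b^{(L+1)}`. -/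
def ResKAN.eval {I d D : ℕ} (net : ResKAN I d D) (x : Fin d → ℝ) : Fin D → ℝ :=
  net.Ahead.mulVec (net.hidden net.L x) + net.bhead

/-- Depth of a Res-KAN: the number of hidden layers. -/
def ResKAN.depth {I d D : ℕ} (net : ResKAN I d D) : ℕ := net.L

/-- Width of a Res-KAN: the maximum of the layer dimensions `d_1, …, d_L` and `d_{L+1} = D`. -/
def ResKAN.width {I d D : ℕ} (net : ResKAN I d D) : ℕ :=
  max ((Finset.range net.L).sup fun l => net.dims (l + 1)) D

/-- Number of nonzero entries of a real matrix. -/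
def matNnz {m n : ℕ} (M : Matrix (Fin m) (Fin n) ℝ) : ℕ :=
  {p : Fin m × Fin n | M p.1 p.2 ≠ 0}.ncard

/-- Number of nonzero entries of a real vector. -/
def vecNnz {m : ℕ} (v : Fin m → ℝ) : ℕ := {i : Fin m | v i ≠ 0}.ncard

/-- Number of nonzero parameters of a Res-KAN layer. -/
def ResKANLayer.nnz {I din dout : ℕ} (ℓ : ResKANLayer I din dout) : ℕ :=
  matNnz ℓ.A + vecNnz ℓ.b + matNnz ℓ.G + matNnz ℓ.β

/-- Number of nonzero parameters of a Res-KAN. -/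
def ResKAN.nnz {I d D : ℕ} (net : ResKAN I d D) : ℕ :=
  (∑ l ∈ Finset.range net.L, (net.layers l).nnz) + matNnz net.Ahead + vecNnz net.bhead

/-- The sparsity rule for smoothness parameter `α`: the coefficients of the B-splines of
order `< ⌈α⌉` vanish. -/
def ResKANLayer.Sparsity {I din dout : ℕ} (ℓ : ResKANLayer I din dout) (α : ℝ) : Prop :=
  ∀ (i : Fin (I + 3)) (j : Fin dout), (i : ℕ) ≤ I → (i : ℕ) < ⌈α⌉₊ → ℓ.β i j = 0

/-- The sparsity rule for a whole network. -/
def ResKAN.Sparsity {I d D : ℕ} (net : ResKAN I d D) (α : ℝ) : Prop :=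
  ∀ l < net.L, (net.layers l).Sparsity α

/-- The class `Res-KAN_{L,W}^{I,α}(ℝ^d, ℝ)` of real-valued Res-KANs with `L` hidden layers
and width at most `W`, satisfying the sparsity rule for `α`. -/
def ResKANClass (I : ℕ) (α : ℝ) (L W d : ℕ) : Set ((Fin d → ℝ) → ℝ) :=
  {f | ∃ net : ResKAN I d 1, net.L = L ∧ net.width ≤ W ∧ net.Sparsity α ∧
        ∀ x, f x = net.eval x 0}

end

/-- The first layer of a multiplication step on states of size `n + 2`: it carries the first `n`
coordinates and replaces the last two, `a` and `p`, by `(p + a)² - C²` and `(p - a)² - C²`.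
It is declared for arbitrary dimensions `din`, `dout` (meant to be `n + 2`), so that no
transport along equalities of dimensions is needed. -/
noncomputable def squareLayer (C : ℝ) (n din dout : ℕ) : ResKANLayer 1 din dout where
  A := fun i j =>
    if (i : ℕ) = n then (if (j : ℕ) = n ∨ (j : ℕ) = n + 1 then 1 else 0)
    else if (i : ℕ) = n + 1 then
      (if (j : ℕ) = n then -1 else if (j : ℕ) = n + 1 then 1 else 0)
    else 0
  b := fun i => if (i : ℕ) = n ∨ (i : ℕ) = n + 1 then C else 0
  G := fun i j => if (i : ℕ) = j ∧ (i : ℕ) < n then 1 else 0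
  β := fun r i =>
    if (i : ℕ) = n ∨ (i : ℕ) = n + 1 then
      (if (r : ℕ) = 2 then -2 * C else if (r : ℕ) = 3 then 1 else 0)
    else 0
  G_diag := by
    intro i j h
    simp [h]

/-- The second layer of a multiplication step, from size `n + 2` (`din`) to `n + 1` (`dout`): it
carries the first `n` coordinates and merges the last two, `u` and `v`, into
`u / 4 + ReLU(-v) / 4`. -/
noncomputable def combineLayer (n din dout : ℕ) : ResKANLayer 1 din dout where
  A := fun i j => if (i : ℕ) = n ∧ (j : ℕ) = n + 1 then -1 else 0
  b := fun _ => 0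
  G := fun i j =>
    if (i : ℕ) = j ∧ (i : ℕ) < n + 1 then (if (i : ℕ) = n then 1 / 4 else 1) else 0
  β := fun r i => if (i : ℕ) = n ∧ (r : ℕ) = 2 then 1 / 4 else 0
  G_diag := by
    intro i j h
    simp [h]

/-! ### Values of the two layers -/

lemma quad_relu {C s : ℝ} (h : 0 ≤ s + C) :
    -2 * C * relu (s + C) + relu (s + C) ^ 2 = s ^ 2 - C ^ 2 := by
  rw [relu, max_eq_left h]
  ring

/-- For `I = 1` the dictionary is `𝒩_0, 𝒩_1, ReLU, ReLU²`, so a layer without splines reduces to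
its last two coefficients. -/
lemma apply_of_no_spline {din dout : ℕ} (ℓ : ResKANLayer 1 din dout) (y : Fin din → ℝ)
    (j : Fin dout) (h0 : ℓ.β 0 j = 0) (h1 : ℓ.β 1 j = 0) :
    ℓ.apply y j = ℓ.β 2 j * relu (ℓ.A.mulVec y j + ℓ.b j)
      + ℓ.β 3 j * relu (ℓ.A.mulVec y j + ℓ.b j) ^ 2 + ℓ.G.mulVec y j := by
  have hs : ∀ f : Fin (1 + 3) → ℝ, ∑ i, f i = f 0 + f 1 + f 2 + f 3 := fun f =>
    Fin.sum_univ_four f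
  have k2 : kanBasis 1 2 = relu := by
    unfold kanBasis
    rfl
  have k3 : kanBasis 1 3 = fun t => relu t ^ 2 := by
    unfold kanBasis
    rfl
  rw [ResKANLayer.apply, hs, h0, h1, k2, k3]
  simp

lemma squareLayer_carry {C : ℝ} {n din dout : ℕ} (y : Fin din → ℝ) (i : Fin dout) (j : Fin din)
    (hi : (i : ℕ) < n) (hj : (j : ℕ) = i) : (squareLayer C n din dout).apply y i = y j := by
  have h1 : (i : ℕ) ≠ n := by omega
  have h2 : (i : ℕ) ≠ n + 1 := by omega
  rw [apply_of_no_spline _ _ _ (by simp [squareLayer, h1, h2]) (by simp [squareLayer, h1, h2])]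
  have hG : (squareLayer C n din dout).G.mulVec y i = y j := by
    rw [Matrix.mulVec, dotProduct, Finset.sum_eq_single j]
    · simp [squareLayer, hj, hi]
    · intro k _ hk
      have : (i : ℕ) ≠ k := fun h => hk (Fin.ext (by omega))
      simp [squareLayer, this]
    · simp
  rw [hG]
  simp [squareLayer, h1, h2]

lemma squareLayer_add {C : ℝ} {n din dout : ℕ} (hdin : din = n + 2) (y : Fin din → ℝ)
    (i : Fin dout) (j k : Fin din) (hi : (i : ℕ) = n) (hj : (j : ℕ) = n) (hk : (k : ℕ) = n + 1)
    (hC : 0 ≤ y j + y k + C) :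
    (squareLayer C n din dout).apply y i = (y j + y k) ^ 2 - C ^ 2 := by
  subst hdin
  obtain rfl : j = (Fin.last n).castSucc := Fin.ext (by simp [hj])
  obtain rfl : k = Fin.last (n + 1) := Fin.ext (by simp [hk])
  rw [apply_of_no_spline _ _ _ (by simp [squareLayer]) (by simp [squareLayer])]
  have hA : (squareLayer C n (n + 2) dout).A.mulVec y i
      = y (Fin.last n).castSucc + y (Fin.last (n + 1)) := by
    rw [Matrix.mulVec, dotProduct, Fin.sum_univ_castSucc, Fin.sum_univ_castSucc,
      Finset.sum_eq_zero]
    · simp [squareLayer, hi]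
    · intro t _
      have h1 := t.isLt
      have h2 : (t : ℕ) ≠ n := by omega
      have h3 : (t : ℕ) ≠ n + 1 := by omega
      simp [squareLayer, hi, h2, h3]
  have hG : (squareLayer C n (n + 2) dout).G.mulVec y i = 0 := by
    simp [Matrix.mulVec, dotProduct, squareLayer, hi]
  rw [hA, hG, ← quad_relu hC]
  simp [squareLayer, hi]

lemma squareLayer_sub {C : ℝ} {n din dout : ℕ} (hdin : din = n + 2) (y : Fin din → ℝ)
    (i : Fin dout) (j k : Fin din) (hi : (i : ℕ) = n + 1) (hj : (j : ℕ) = n)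
    (hk : (k : ℕ) = n + 1) (hC : 0 ≤ -y j + y k + C) :
    (squareLayer C n din dout).apply y i = (-y j + y k) ^ 2 - C ^ 2 := by
  subst hdin
  obtain rfl : j = (Fin.last n).castSucc := Fin.ext (by simp [hj])
  obtain rfl : k = Fin.last (n + 1) := Fin.ext (by simp [hk])
  rw [apply_of_no_spline _ _ _ (by simp [squareLayer]) (by simp [squareLayer])]
  have hA : (squareLayer C n (n + 2) dout).A.mulVec y i
      = -y (Fin.last n).castSucc + y (Fin.last (n + 1)) := by
    rw [Matrix.mulVec, dotProduct, Fin.sum_univ_castSucc, Fin.sum_univ_castSucc,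
      Finset.sum_eq_zero]
    · simp [squareLayer, hi]
    · intro t _
      have h1 := t.isLt
      have h2 : (t : ℕ) ≠ n := by omega
      have h3 : (t : ℕ) ≠ n + 1 := by omega
      simp [squareLayer, hi, h2, h3]
  have hG : (squareLayer C n (n + 2) dout).G.mulVec y i = 0 := by
    simp [Matrix.mulVec, dotProduct, squareLayer, hi]
  rw [hA, hG, ← quad_relu hC]
  simp [squareLayer, hi]

lemma combineLayer_carry {n din dout : ℕ} (y : Fin din → ℝ) (i : Fin dout) (j : Fin din)
    (hi : (i : ℕ) < n) (hj : (j : ℕ) = i) : (combineLayer n din dout).apply y i = y j := by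
  have h1 : (i : ℕ) ≠ n := by omega
  rw [apply_of_no_spline _ _ _ (by simp [combineLayer]) (by simp [combineLayer])]
  have hG : (combineLayer n din dout).G.mulVec y i = y j := by
    rw [Matrix.mulVec, dotProduct, Finset.sum_eq_single j]
    · simp [combineLayer, hj, h1, hi.le]
    · intro k _ hk
      have : (i : ℕ) ≠ k := fun h => hk (Fin.ext (by omega))
      simp [combineLayer, this]
    · simp
  rw [hG]
  simp [combineLayer, h1]

lemma combineLayer_merge {n din dout : ℕ} (y : Fin din → ℝ)
    (i : Fin dout) (j k : Fin din) (hi : (i : ℕ) = n) (hj : (j : ℕ) = n) (hk : (k : ℕ) = n + 1)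
    (hv : y k ≤ 0) :
    (combineLayer n din dout).apply y i = (y j - y k) / 4 := by
  rw [apply_of_no_spline _ _ _ (by simp [combineLayer]) (by simp [combineLayer])]
  have hA : (combineLayer n din dout).A.mulVec y i = - y k := by
    rw [Matrix.mulVec, dotProduct, Finset.sum_eq_single k]
    · simp [combineLayer, hi, hk]
    · intro t _ ht
      have : (t : ℕ) ≠ n + 1 := fun h => ht (Fin.ext (by omega))
      simp [combineLayer, this]
    · simp
  have hG : (combineLayer n din dout).G.mulVec y i = y j / 4 := by
    rw [Matrix.mulVec, dotProduct, Finset.sum_eq_single j]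
    · simp [combineLayer, hi, hj]
      ring
    · intro t _ ht
      have : n ≠ (t : ℕ) := fun h => ht (Fin.ext (by omega))
      simp [combineLayer, hi, this]
    · simp
  have hb : (combineLayer n din dout).b i = 0 := rfl
  rw [hA, hG, hb, relu, add_zero, max_eq_left (by linarith)]
  simp [combineLayer, hi]
  ring

/-! ### Parameter counts of the two layers -/

lemma matNnz_le {m n : ℕ} (A : Matrix (Fin m) (Fin n) ℝ) (S : Finset (ℕ × ℕ))
    (h : ∀ i j, A i j ≠ 0 → ((i : ℕ), (j : ℕ)) ∈ S) : matNnz A ≤ S.card := by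
  rw [matNnz, ← Set.ncard_coe_finset]
  refine Set.ncard_le_ncard_of_injOn (fun p => ((p.1 : ℕ), (p.2 : ℕ))) ?_ ?_ S.finite_toSet
  · intro p hp
    exact h _ _ hp
  · rintro ⟨a, b⟩ _ ⟨c, e⟩ _ hpq
    simp only [Prod.mk.injEq] at hpq
    exact Prod.ext (Fin.ext hpq.1) (Fin.ext hpq.2)

lemma vecNnz_le {m : ℕ} (v : Fin m → ℝ) (S : Finset ℕ)
    (h : ∀ i, v i ≠ 0 → (i : ℕ) ∈ S) : vecNnz v ≤ S.card := by
  rw [vecNnz, ← Set.ncard_coe_finset]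
  refine Set.ncard_le_ncard_of_injOn (fun p => (p : ℕ)) ?_ ?_ S.finite_toSet
  · intro p hp
    exact h _ hp
  · intro a _ b _ hab
    exact Fin.ext hab

lemma squareLayer_nnz (C : ℝ) (n din dout : ℕ) : (squareLayer C n din dout).nnz ≤ n + 10 := by
  have hA : matNnz (squareLayer C n din dout).A ≤ 4 := by
    refine (matNnz_le _ {(n, n), (n, n + 1), (n + 1, n), (n + 1, n + 1)} ?_).trans
      Finset.card_le_four
    intro i j h
    simp only [squareLayer] at h
    simp only [Finset.mem_insert, Finset.mem_singleton, Prod.mk.injEq]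
    split_ifs at h <;> first | omega | simp at h
  have hb : vecNnz (squareLayer C n din dout).b ≤ 2 := by
    refine (vecNnz_le _ {n, n + 1} ?_).trans Finset.card_le_two
    intro i h
    simp only [squareLayer] at h
    simp only [Finset.mem_insert, Finset.mem_singleton]
    split_ifs at h <;> first | omega | simp at h
  have hG : matNnz (squareLayer C n din dout).G ≤ n := by
    refine (matNnz_le _ ((Finset.range n).image fun t => (t, t)) ?_).trans
      (Finset.card_image_le.trans (by simp))
    intro i j h
    simp only [squareLayer] at h
    simp only [Finset.mem_image, Finset.mem_range, Prod.mk.injEq]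
    split_ifs at h with hc
    · exact ⟨i, hc.2, rfl, hc.1⟩
    · simp at h
  have hβ : matNnz (squareLayer C n din dout).β ≤ 4 := by
    refine (matNnz_le _ {(2, n), (2, n + 1), (3, n), (3, n + 1)} ?_).trans
      Finset.card_le_four
    intro i j h
    simp only [squareLayer] at h
    simp only [Finset.mem_insert, Finset.mem_singleton, Prod.mk.injEq]
    split_ifs at h <;> first | omega | simp at h
  unfold ResKANLayer.nnz
  omega

lemma combineLayer_nnz (n din dout : ℕ) : (combineLayer n din dout).nnz ≤ n + 3 := by
  have hA : matNnz (combineLayer n din dout).A ≤ 1 := by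
    refine (matNnz_le _ {(n, n + 1)} ?_).trans (Finset.card_singleton _).le
    intro i j h
    simp only [combineLayer] at h
    simp only [Finset.mem_singleton, Prod.mk.injEq]
    split_ifs at h <;> first | omega | simp at h
  have hb : vecNnz (combineLayer n din dout).b ≤ 0 :=
    vecNnz_le _ ∅ fun i h => absurd rfl h
  have hG : matNnz (combineLayer n din dout).G ≤ n + 1 := by
    refine (matNnz_le _ ((Finset.range (n + 1)).image fun t => (t, t)) ?_).trans
      (Finset.card_image_le.trans (by simp))
    intro i j h
    simp only [combineLayer] at h
    simp only [Finset.mem_image, Finset.mem_range, Prod.mk.injEq]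
    by_cases hc : (i : ℕ) = j ∧ (i : ℕ) < n + 1
    · exact ⟨i, hc.2, rfl, hc.1⟩
    · exact absurd (if_neg hc) h
  have hβ : matNnz (combineLayer n din dout).β ≤ 1 := by
    refine (matNnz_le _ {(2, n)} ?_).trans (Finset.card_singleton _).le
    intro i j h
    simp only [combineLayer] at h
    simp only [Finset.mem_singleton, Prod.mk.injEq]
    split_ifs at h <;> first | omega | simp at h
  unfold ResKANLayer.nnz
  omega

/-! ### The network -/

/-- The multiplication network: layers `2k` and `2k + 1` act on a state of size `d - k` and form
the `k`-th multiplication step. Only the first `2 (d - 1)` layers matter; beyond them the truncated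
subtractions are harmless junk. -/
noncomputable def prodNet (d : ℕ) (C : ℝ) : ResKAN 1 d 1 where
  L := 2 * (d - 1)
  dims := fun l => d - l / 2
  dims_zero := by simp
  layers := fun l =>
    if l % 2 = 0 then squareLayer C (d - 2 - l / 2) _ _ else combineLayer (d - 2 - l / 2) _ _
  Ahead := fun _ j => if (j : ℕ) = 0 then 1 else 0
  bhead := fun _ => 0

lemma prodNet_layers_even (d : ℕ) (C : ℝ) (k : ℕ) :
    (prodNet d C).layers (2 * k) = squareLayer C (d - 2 - k) _ _ := by
  have h1 : 2 * k % 2 = 0 := by omega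
  have h2 : 2 * k / 2 = k := by omega
  simp only [prodNet, h1, if_true, h2]

lemma prodNet_layers_odd (d : ℕ) (C : ℝ) (k : ℕ) :
    (prodNet d C).layers (2 * k + 1) = combineLayer (d - 2 - k) _ _ := by
  have h1 : (2 * k + 1) % 2 ≠ 0 := by omega
  have h2 : (2 * k + 1) / 2 = k := by omega
  simp only [prodNet, h1, if_false, h2]

lemma prodNet_dims (d : ℕ) (C : ℝ) (l : ℕ) : (prodNet d C).dims l = d - l / 2 := rfl

lemma prodNet_β (d : ℕ) (C : ℝ) (l : ℕ) (i : Fin (1 + 3)) (j : Fin ((prodNet d C).dims (l + 1)))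
    (hi : (i : ℕ) ≤ 1) : ((prodNet d C).layers l).β i j = 0 := by
  have h2 : (i : ℕ) ≠ 2 := by omega
  have h3 : (i : ℕ) ≠ 3 := by omega
  simp only [prodNet]
  split_ifs
  · simp [squareLayer, h2, h3]
  · simp [combineLayer, h2]

/-- Bound on the first `K` multiplication steps, with the budget `r² + 12 r` of the remaining `r`
steps moved to the left-hand side to avoid subtraction. -/
lemma prodNet_nnz_partial (e : ℕ) (C : ℝ) (K r : ℕ) (h : K + r = e) :
    (∑ l ∈ Finset.range (2 * K), ((prodNet (e + 1) C).layers l).nnz) + (r ^ 2 + 12 * r)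
      ≤ e ^ 2 + 12 * e := by
  induction K generalizing r with
  | zero => simp_all
  | succ K ih =>
    have := ih (r + 1) (by omega)
    rw [show 2 * (K + 1) = 2 * K + 1 + 1 by ring, Finset.sum_range_succ, Finset.sum_range_succ,
      prodNet_layers_even, prodNet_layers_odd]
    have h1 := squareLayer_nnz C (e + 1 - 2 - K) ((prodNet (e + 1) C).dims (2 * K))
      ((prodNet (e + 1) C).dims (2 * K + 1))
    have h2 := combineLayer_nnz (e + 1 - 2 - K) ((prodNet (e + 1) C).dims (2 * K + 1))
      ((prodNet (e + 1) C).dims (2 * K + 1 + 1))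
    have h3 : e + 1 - 2 - K = r := by omega
    rw [h3] at h1 h2 ⊢
    nlinarith

lemma prodNet_nnz (e : ℕ) (C : ℝ) : (prodNet (e + 1) C).nnz ≤ e ^ 2 + 12 * e + 1 := by
  have h1 := prodNet_nnz_partial e C e 0 (by simp)
  have h2 : matNnz (prodNet (e + 1) C).Ahead ≤ 1 := by
    refine (matNnz_le _ {(0, 0)} ?_).trans (Finset.card_singleton _).le
    intro i j h
    simp only [prodNet] at h
    simp only [Finset.mem_singleton, Prod.mk.injEq]
    split_ifs at h <;> first | omega | simp at h
  have h3 : vecNnz (prodNet (e + 1) C).bhead ≤ 0 :=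
    vecNnz_le _ ∅ fun i h => absurd rfl h
  change (∑ l ∈ Finset.range (2 * e), ((prodNet (e + 1) C).layers l).nnz)
    + matNnz (prodNet (e + 1) C).Ahead + vecNnz (prodNet (e + 1) C).bhead ≤ _
  omega

/-- One multiplication step on hidden states: `X (d - 2 - k)` is the next factor, `p` the current
product. -/
lemma prodNet_step (d : ℕ) (C : ℝ) (x : Fin d → ℝ) (k : ℕ) (hk : k + 2 ≤ d)
    (X : ℕ → ℝ) (p : ℝ)
    (hX : ∀ i : Fin ((prodNet d C).dims (2 * k)), (i : ℕ) + 1 + k < d →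
      (prodNet d C).hidden (2 * k) x i = X i)
    (hp : ∀ i : Fin ((prodNet d C).dims (2 * k)), (i : ℕ) + 1 + k = d →
      (prodNet d C).hidden (2 * k) x i = p)
    (hC : |X (d - 2 - k)| + |p| ≤ C) :
    (∀ i : Fin ((prodNet d C).dims (2 * (k + 1))), (i : ℕ) + 1 + (k + 1) < d →
      (prodNet d C).hidden (2 * (k + 1)) x i = X i) ∧
    (∀ i : Fin ((prodNet d C).dims (2 * (k + 1))), (i : ℕ) + 1 + (k + 1) = d →
      (prodNet d C).hidden (2 * (k + 1)) x i = X (d - 2 - k) * p) := by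
  obtain ⟨n, rfl⟩ : ∃ n, d = n + 2 + k := ⟨d - 2 - k, by omega⟩
  have hn : n + 2 + k - 2 - k = n := by omega
  rw [hn] at hC ⊢
  have hd0 : (prodNet (n + 2 + k) C).dims (2 * k) = n + 2 := by rw [prodNet_dims]; omega
  have hd1 : (prodNet (n + 2 + k) C).dims (2 * k + 1) = n + 2 := by rw [prodNet_dims]; omega
  have ha := abs_le.1 (le_refl |X n|)
  have hb := abs_le.1 (le_refl |p|)
  set y := (prodNet (n + 2 + k) C).hidden (2 * k) x with hy
  have e1 : (prodNet (n + 2 + k) C).hidden (2 * k + 1) x = (squareLayer C n _ _).apply y := by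
    rw [ResKAN.hidden, prodNet_layers_even, hn]
  have e2 : (prodNet (n + 2 + k) C).hidden (2 * (k + 1)) x
      = (combineLayer n _ _).apply
        ((squareLayer C n _ ((prodNet (n + 2 + k) C).dims (2 * k + 1))).apply y) := by
    rw [← e1]
    change ((prodNet (n + 2 + k) C).layers (2 * k + 1)).apply _ = _
    rw [prodNet_layers_odd, hn]
    rfl
  rw [e2]
  constructor
  · intro i hi
    have hin : (i : ℕ) < n := by omega
    rw [combineLayer_carry (n := n) (din := (prodNet (n + 2 + k) C).dims (2 * k + 1)) _ i
        ⟨i, by omega⟩ hin rfl,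
      squareLayer_carry (n := n) (din := (prodNet (n + 2 + k) C).dims (2 * k))
        (dout := (prodNet (n + 2 + k) C).dims (2 * k + 1)) _ ⟨i, by omega⟩ ⟨i, by omega⟩ hin rfl,
      hX _ (by simp only; omega)]
  · intro i hi
    have ya : y ⟨n, by omega⟩ = X n := hX _ (show n + 1 + k < n + 2 + k by omega)
    have yp : y ⟨n + 1, by omega⟩ = p := hp _ (show n + 1 + 1 + k = n + 2 + k by omega)
    have eu := squareLayer_add (C := C) hd0 y
      (⟨n, by omega⟩ : Fin ((prodNet (n + 2 + k) C).dims (2 * k + 1)))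
      ⟨n, by omega⟩ ⟨n + 1, by omega⟩ rfl rfl rfl (by rw [ya, yp]; linarith)
    have ev := squareLayer_sub (C := C) hd0 y
      (⟨n + 1, by omega⟩ : Fin ((prodNet (n + 2 + k) C).dims (2 * k + 1)))
      ⟨n, by omega⟩ ⟨n + 1, by omega⟩ rfl rfl rfl (by rw [ya, yp]; linarith)
    rw [ya, yp] at eu ev
    have hv : (-X n + p) ^ 2 - C ^ 2 ≤ 0 := by
      have := sq_le_sq' (a := -X n + p) (b := C) (by linarith) (by linarith)
      linarith
    have hin : (i : ℕ) = n := by omega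
    rw [combineLayer_merge (n := n) (din := (prodNet (n + 2 + k) C).dims (2 * k + 1)) _ i
      ⟨n, by omega⟩ ⟨n + 1, by omega⟩ hin rfl rfl (by rw [ev]; exact hv), eu, ev]
    ring

/-- After `k` steps the state is `(x_0, …, x_{d-k-2}, ∏_{d-1-k ≤ j < d} x_j)`. -/
lemma prodNet_hidden (d : ℕ) (hd : 2 ≤ d) (M : ℝ) (hM : 0 < M) (X : ℕ → ℝ)
    (hX : ∀ i, |X i| ≤ M) (k : ℕ) (hk : k < d) :
    (∀ i : Fin ((prodNet d (2 * (M + 1) ^ d)).dims (2 * k)), (i : ℕ) + 1 + k < d →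
      (prodNet d (2 * (M + 1) ^ d)).hidden (2 * k) (fun j => X j) i = X i) ∧
    (∀ i : Fin ((prodNet d (2 * (M + 1) ^ d)).dims (2 * k)), (i : ℕ) + 1 + k = d →
      (prodNet d (2 * (M + 1) ^ d)).hidden (2 * k) (fun j => X j) i
        = ∏ j ∈ Finset.Ico (d - 1 - k) d, X j) := by
  induction k with
  | zero =>
    refine ⟨fun i _ => rfl, fun i hi => ?_⟩
    have h1 : Finset.Ico (d - 1 - 0) d = {d - 1} := by
      ext t
      simp only [Finset.mem_Ico, Finset.mem_singleton]
      omega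
    have h2 : (i : ℕ) = d - 1 := by omega
    rw [h1, Finset.prod_singleton, ← h2]
    rfl
  | succ k ih =>
    obtain ⟨ih1, ih2⟩ := ih (by omega)
    have hB : (1 : ℝ) ≤ M + 1 := by linarith
    have hbound : |X (d - 2 - k)| + |∏ j ∈ Finset.Ico (d - 1 - k) d, X j| ≤ 2 * (M + 1) ^ d := by
      have h1 : |X (d - 2 - k)| ≤ (M + 1) ^ d :=
        ((hX _).trans (by linarith)).trans (le_self_pow₀ hB (by omega))
      have h2 : |∏ j ∈ Finset.Ico (d - 1 - k) d, X j| ≤ (M + 1) ^ d := by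
        rw [Finset.abs_prod]
        calc ∏ j ∈ Finset.Ico (d - 1 - k) d, |X j|
            ≤ ∏ j ∈ Finset.Ico (d - 1 - k) d, (M + 1) :=
              Finset.prod_le_prod (fun _ _ => abs_nonneg _) fun j _ => (hX j).trans (by linarith)
          _ ≤ (M + 1) ^ d := by
              rw [Finset.prod_const, Nat.card_Ico]
              exact pow_le_pow_right₀ hB (by omega)
      linarith
    have := prodNet_step d _ (fun j => X j) k (by omega) X _ ih1 ih2 hbound
    refine ⟨this.1, fun i hi => ?_⟩
    rw [this.2 i hi, show d - 1 - (k + 1) = d - 2 - k by omega,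
      Finset.prod_eq_prod_Ico_succ_bot (show d - 2 - k < d by omega),
      show d - 2 - k + 1 = d - 1 - k by omega]

lemma prodNet_eval (d : ℕ) (hd : 2 ≤ d) (M : ℝ) (hM : 0 < M) (x : Fin d → ℝ)
    (hx : ∀ i, x i ∈ Set.Icc (-M) M) :
    (prodNet d (2 * (M + 1) ^ d)).eval x 0 = ∏ i, x i := by
  obtain ⟨X, hXx, hX⟩ : ∃ X : ℕ → ℝ, (x = fun j : Fin d => X j) ∧ ∀ i, |X i| ≤ M := by
    refine ⟨fun i => if h : i < d then x ⟨i, h⟩ else 0, by ext j; simp, fun i => ?_⟩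
    by_cases h : i < d
    · simpa [h] using abs_le.2 (hx ⟨i, h⟩)
    · simpa [h] using hM.le
  subst hXx
  have h := (prodNet_hidden d hd M hM X hX (d - 1) (by omega)).2
  have hdim : (prodNet d (2 * (M + 1) ^ d)).dims (2 * (d - 1)) = 1 := by
    rw [prodNet_dims]
    omega
  have hb : (prodNet d (2 * (M + 1) ^ d)).bhead 0 = 0 := rfl
  have h0 := h ⟨0, by omega⟩ (by simp only; omega)
  rw [show d - 1 - (d - 1) = 0 by omega, Nat.Ico_zero_eq_range, ← Fin.prod_univ_eq_prod_range]
    at h0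
  rw [← h0, ResKAN.eval, Pi.add_apply, hb, add_zero, Matrix.mulVec, dotProduct]
  refine (Finset.sum_eq_single
    (⟨0, by omega⟩ : Fin ((prodNet d (2 * (M + 1) ^ d)).dims (2 * (d - 1)))) ?_ ?_).trans ?_
  · intro t _ ht
    have h1 : (t : ℕ) < 1 := lt_of_lt_of_eq t.isLt hdim
    exact absurd (Fin.ext (Nat.lt_one_iff.1 h1)) ht
  · exact fun hne => absurd (Finset.mem_univ _) hne
  · exact one_mul _

/-- Exact multiplication on arbitrarily large hypercubes.
For every `d ≥ 2` and `M > 0` there is a Res-KAN `×²_d : ℝ^d → ℝ`, whose activation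
coefficient matrices are supported only on the ReLU and ReLU² basis entries (so the
sparsity rule holds for every smoothness parameter `α > 0`), with depth `2(d-1)`,
width at most `d + 4`, and at most `d² + 33d - 36` nonzero parameters, computing
`x ↦ ∏ i, x i` on `[-M, M]^d`. -/
theorem statement0 (d : ℕ) (hd : 2 ≤ d) (M : ℝ) (hM : 0 < M) :
    ∃ (I : ℕ) (net : ResKAN I d 1), 1 ≤ I ∧
      (∀ l, l < net.L → ∀ (i : Fin (I + 3)) (j : Fin (net.dims (l + 1))),
        (i : ℕ) ≤ I → (net.layers l).β i j = 0) ∧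
      (∀ α : ℝ, 0 < α → net.Sparsity α) ∧
      net.depth = 2 * (d - 1) ∧
      net.width ≤ d + 4 ∧
      net.nnz ≤ d ^ 2 + 33 * d - 36 ∧
      ∀ x : Fin d → ℝ, (∀ i, x i ∈ Set.Icc (-M) M) →
        net.eval x 0 = ∏ i, x i := by
  refine ⟨1, prodNet d (2 * (M + 1) ^ d), le_rfl, fun l _ i j hi => prodNet_β d _ l i j hi,
    fun α _ l _ i j hi _ => prodNet_β d _ l i j hi, rfl, ?_, ?_, prodNet_eval d hd M hM⟩
  · refine max_le (Finset.sup_le fun l _ => ?_) (by omega)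
    rw [prodNet_dims]
    omega
  · obtain ⟨e, rfl⟩ : ∃ e, d = e + 1 := ⟨d - 1, by omega⟩
    refine (prodNet_nnz e _).trans (Nat.le_sub_of_add_le ?_)
    nlinarith
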